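/- Let K₀, K₁, ..., Kₙ be symmetric plane convex bodies of positive area, and denote by a(K,L) the mixed area (the polarization of the area under Minkowski sum). Then for any c₁, ..., cₙ ∈ ℝ, a(K₀)·Σ_{i,j=1}^n c_i c_j a(K_i, K_j) ≤ (Σ_{k=1}^n c_k a(K_k, K₀))². -/

import Mathlib

open Pointwise MeasureTheory

/-- The mixed area of two plane convex bodies, defined by polarization of the area under
Minkowski sum: `a(K+L) = a(K) + 2a(K,L) + a(L)`. -/
noncomputable def mixedArea (K L : Set (ℝ × ℝ)) : ℝ :=
  ((volume (K + L)).toReal - (volume K).toReal - (volume L).toReal) / 2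

open Set

/-- symmetric segment -/
def seg (c : ℝ) (v : ℝ × ℝ) : Set (ℝ × ℝ) := (fun t : ℝ => t • v) '' Icc (-c) c

/-- zonogon -/
def zon (a : ℝ) (c τ : ℕ → ℝ) (m : ℕ) : Set (ℝ × ℝ) :=
  seg a (0, 1) + ∑ j ∈ Finset.range m, seg (c j) (1, -τ j)

lemma zon_succ (a : ℝ) (c τ : ℕ → ℝ) (m : ℕ) :
    zon a c τ (m + 1) = zon a c τ m + seg (c m) (1, -τ m) := by
  simp [zon, Finset.sum_range_succ, add_assoc]

lemma Icc_add_Icc_real {a b c d : ℝ} (h : a ≤ b) (h' : c ≤ d) :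
    Icc a b + Icc c d = Icc (a + c) (b + d) := by
  exact Set.Icc_add_Icc h h'

lemma seg_add {c c' : ℝ} (h : 0 ≤ c) (h' : 0 ≤ c') (v : ℝ × ℝ) :
    seg c v + seg c' v = seg (c + c') v := by
  have := Set.image_add (LinearMap.toSpanSingleton ℝ (ℝ × ℝ) v) (s := Icc (-c) c) (t := Icc (-c') c')
  rw [Icc_add_Icc_real (by linarith) (by linarith)] at this
  simp only [LinearMap.toSpanSingleton_apply] at this
  rw [seg, seg, seg, ← this]
  congr 2
  ring

lemma zon_add {a a' : ℝ} {c c' : ℕ → ℝ} (τ : ℕ → ℝ) (m : ℕ) (ha : 0 ≤ a) (ha' : 0 ≤ a')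
    (hc : ∀ j, 0 ≤ c j) (hc' : ∀ j, 0 ≤ c' j) :
    zon a c τ m + zon a' c' τ m = zon (a + a') (c + c') τ m := by
  rw [zon, zon, zon, add_add_add_comm, seg_add ha ha', ← Finset.sum_add_distrib]
  congr 1
  exact Finset.sum_congr rfl fun j _ => seg_add (hc j) (hc' j) _

lemma seg_compact (c : ℝ) (v : ℝ × ℝ) : IsCompact (seg c v) :=
  isCompact_Icc.image (by fun_prop)

lemma seg_convex (c : ℝ) (v : ℝ × ℝ) : Convex ℝ (seg c v) :=
  (convex_Icc (-c) c).linear_image (LinearMap.toSpanSingleton ℝ (ℝ × ℝ) v)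

lemma zon_compact (a : ℝ) (c τ : ℕ → ℝ) (m : ℕ) : IsCompact (zon a c τ m) := by
  induction m with
  | zero => simpa [zon] using seg_compact _ _
  | succ m ih => rw [zon_succ]; exact ih.add (seg_compact _ _)

lemma zon_convex (a : ℝ) (c τ : ℕ → ℝ) (m : ℕ) : Convex ℝ (zon a c τ m) := by
  induction m with
  | zero => simpa [zon] using seg_convex _ _
  | succ m ih => rw [zon_succ]; exact ih.add (seg_convex _ _)

/-- linear functional -/
def lf (s t : ℝ) : (ℝ × ℝ) →ₗ[ℝ] ℝ := s • LinearMap.fst ℝ ℝ ℝ + t • LinearMap.snd ℝ ℝ ℝ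

lemma lf_apply (s t : ℝ) (p : ℝ × ℝ) : lf s t p = s * p.1 + t * p.2 := by simp [lf]

lemma lf_seg {c : ℝ} (hc : 0 ≤ c) (s t : ℝ) (v : ℝ × ℝ) :
    lf s t '' seg c v = Icc (-(c * |lf s t v|)) (c * |lf s t v|) := by
  rw [seg, image_image]
  simp only [map_smul, smul_eq_mul]
  generalize lf s t v = r
  ext x
  constructor
  · rintro ⟨u, ⟨h1, h2⟩, rfl⟩
    rw [mem_Icc, ← abs_le, abs_mul]
    exact mul_le_mul_of_nonneg_right (abs_le.2 ⟨h1, h2⟩) (abs_nonneg _)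
  · intro hx
    rw [mem_Icc, ← abs_le] at hx
    by_cases hr : r = 0
    · subst hr
      simp at hx
      exact ⟨0, ⟨by linarith, hc⟩, by simp [hx]⟩
    · refine ⟨x / r, ?_, by field_simp⟩
      rw [mem_Icc, ← abs_le, abs_div, div_le_iff₀ (abs_pos.2 hr)]
      exact hx

lemma lf_zon {a : ℝ} {c : ℕ → ℝ} (τ : ℕ → ℝ) (m : ℕ) (ha : 0 ≤ a) (hc : ∀ j, 0 ≤ c j) (s t : ℝ) :
    lf s t '' zon a c τ m =
      Icc (-(a * |t| + ∑ j ∈ Finset.range m, c j * |s - τ j * t|))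
        (a * |t| + ∑ j ∈ Finset.range m, c j * |s - τ j * t|) := by
  induction m with
  | zero =>
    simp only [zon, Finset.range_zero, Finset.sum_empty, add_zero]
    rw [lf_seg ha]; simp [lf_apply]
  | succ m ih =>
    have h0 : 0 ≤ a * |t| + ∑ j ∈ Finset.range m, c j * |s - τ j * t| :=
      add_nonneg (by positivity) (Finset.sum_nonneg fun j _ => mul_nonneg (hc j) (abs_nonneg _))
    have h1 : 0 ≤ c m * |s - τ m * t| := mul_nonneg (hc m) (abs_nonneg _)
    rw [zon_succ, Set.image_add, ih, lf_seg (hc m)]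
    have e : lf s t (1, -τ m) = s - τ m * t := by rw [lf_apply]; ring
    rw [e, Icc_add_Icc_real (by linarith) (by linarith), Finset.sum_range_succ]
    congr 1 <;> ring

lemma zon_nonempty {a : ℝ} {c : ℕ → ℝ} (τ : ℕ → ℝ) (m : ℕ) (ha : 0 ≤ a) (hc : ∀ j, 0 ≤ c j) :
    (zon a c τ m).Nonempty := by
  have := lf_zon τ m ha hc 0 0
  rw [← Set.image_nonempty (f := lf 0 0), this]
  simp

lemma fiber_vol {I : Set ℝ} (hI : IsCompact I) (hc : Convex ℝ I) (hn : I.Nonempty) {a : ℝ} (ha : 0 ≤ a) :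
    volume (I + Icc (-a) a) = volume I + ENNReal.ofReal (2 * a) := by
  have h := eq_Icc_of_connected_compact ⟨hn, hc.isPreconnected⟩ hI
  have hle : sInf I ≤ sSup I := by
    by_contra hlt
    rw [h, Icc_eq_empty hlt] at hn
    exact absurd hn (by simp)
  rw [h, Icc_add_Icc_real hle (by linarith), Real.volume_Icc, Real.volume_Icc, ← ENNReal.ofReal_add (by linarith) (by linarith)]
  congr 1; ring

lemma vol_add_vert {K : Set (ℝ × ℝ)} (hK : IsCompact K) (hc : Convex ℝ K) {a : ℝ} (ha : 0 ≤ a) :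
    volume (K + seg a (0, 1)) = volume K + ENNReal.ofReal (2 * a) * volume (Prod.fst '' K) := by
  have m1 : MeasurableSet K := hK.measurableSet
  have m2 : MeasurableSet (K + seg a (0, 1)) := (hK.add (seg_compact _ _)).measurableSet
  have m3 : MeasurableSet (Prod.fst '' K) := (hK.image continuous_fst).measurableSet
  rw [Measure.volume_eq_prod, Measure.prod_apply m2, Measure.prod_apply m1, ← lintegral_indicator_const m3,
    ← lintegral_add_right _ (measurable_const.indicator m3)]
  congr 1
  ext x
  have e : Prod.mk x ⁻¹' (K + seg a (0, 1)) = Prod.mk x ⁻¹' K + Icc (-a) a := by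
    ext y
    simp only [mem_preimage, Set.mem_add, seg, mem_image]
    constructor
    · rintro ⟨⟨p, q⟩, hp, _, ⟨t, ht, rfl⟩, h⟩
      simp at h
      obtain ⟨rfl, rfl⟩ := h
      exact ⟨q, hp, t, ht, rfl⟩
    · rintro ⟨q, hq, t, ht, rfl⟩
      exact ⟨(x, q), hq, _, ⟨t, ht, rfl⟩, by simp⟩
  rw [e]
  by_cases hx : x ∈ Prod.fst '' K
  · rw [indicator_of_mem hx]
    apply fiber_vol _ _ _ ha
    · have : Prod.mk x ⁻¹' K = Prod.snd '' (K ∩ Prod.fst ⁻¹' {x}) := by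
        ext y
        constructor
        · intro h; exact ⟨(x, y), ⟨h, rfl⟩, rfl⟩
        · rintro ⟨⟨p, q⟩, ⟨h, h1⟩, h2⟩
          simp at h1 h2
          subst h1 h2; exact h
      rw [this]
      exact (hK.inter_right (isClosed_singleton.preimage continuous_fst)).image continuous_snd
    · intro y hy z hz s t hs ht hst
      have := hc hy hz hs ht hst
      simp only [mem_preimage]
      convert this using 1
      ext <;> simp [← add_mul, hst]
    · obtain ⟨⟨p, q⟩, h, rfl⟩ := hx
      exact ⟨q, h⟩
  · rw [indicator_of_notMem hx]
    have : Prod.mk x ⁻¹' K = ∅ := by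
      ext y
      simp only [mem_preimage, mem_empty_iff_false, iff_false]
      intro h; exact hx ⟨(x, y), h, rfl⟩
    rw [this]; simp

/-- shear-swap -/
noncomputable def shear (τ : ℝ) : (ℝ × ℝ) →ₗ[ℝ] (ℝ × ℝ) :=
  Matrix.toLin (Module.Basis.finTwoProd ℝ) (Module.Basis.finTwoProd ℝ) !![τ, 1; 1, 0]

lemma shear_apply (τ : ℝ) (p : ℝ × ℝ) : shear τ p = (τ * p.1 + p.2, p.1) := by
  simp [shear, Matrix.toLin_finTwoProd_apply]

lemma vol_shear (τ : ℝ) (s : Set (ℝ × ℝ)) : volume (shear τ '' s) = volume s := by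
  rw [Measure.addHaar_image_linearMap, shear, LinearMap.det_toLin]
  simp [Matrix.det_fin_two]

lemma vol_add_seg {K : Set (ℝ × ℝ)} (hK : IsCompact K) (hc : Convex ℝ K) {a : ℝ} (ha : 0 ≤ a) (τ : ℝ) :
    volume (K + seg a (1, -τ)) = volume K + ENNReal.ofReal (2 * a) * volume (lf τ 1 '' K) := by
  have h1 : shear τ '' seg a (1, -τ) = seg a (0, 1) := by
    rw [seg, seg, image_image]
    simp [shear_apply, mul_comm]
  rw [← vol_shear τ, Set.image_add, h1, vol_add_vert _ (hc.linear_image _) ha, vol_shear, image_image]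
  · congr 3
    ext p; simp [shear_apply, lf_apply]
  · exact hK.image (LinearMap.continuous_of_finiteDimensional _)

lemma vol_zon {a : ℝ} {c : ℕ → ℝ} (τ : ℕ → ℝ) (m : ℕ) (ha : 0 ≤ a) (hc : ∀ j, 0 ≤ c j) :
    (volume (zon a c τ m)).toReal = 4 * a * ∑ j ∈ Finset.range m, c j +
      2 * ∑ j ∈ Finset.range m, ∑ k ∈ Finset.range m, c j * c k * |τ j - τ k| := by
  induction m with
  | zero =>
    have := vol_add_vert (K := {0}) isCompact_singleton (convex_singleton _) ha
    simp at this
    simp [zon, this]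
  | succ m ih =>
    have h0 : 0 ≤ a + ∑ j ∈ Finset.range m, c j * |τ m - τ j| :=
      add_nonneg (by positivity) (Finset.sum_nonneg fun j _ => mul_nonneg (hc j) (abs_nonneg _))
    rw [zon_succ, vol_add_seg (zon_compact ..) (zon_convex ..) (hc m), lf_zon τ m ha hc, Real.volume_Icc,
      ENNReal.toReal_add (zon_compact ..).measure_ne_top (by finiteness), ih, ENNReal.toReal_mul,
      ENNReal.toReal_ofReal (by linarith [hc m]), ENNReal.toReal_ofReal (by simp; linarith)]
    simp only [Finset.sum_range_succ, Finset.sum_add_distrib, abs_one, mul_one, sub_self, abs_zero, mul_zero]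
    have e1 : ∑ j ∈ Finset.range m, c j * c m * |τ j - τ m| = c m * ∑ j ∈ Finset.range m, c j * |τ m - τ j| := by
      rw [Finset.mul_sum]; refine Finset.sum_congr rfl fun j _ => ?_
      rw [abs_sub_comm]; ring
    have e2 : ∑ j ∈ Finset.range m, c m * c j * |τ m - τ j| = c m * ∑ j ∈ Finset.range m, c j * |τ m - τ j| := by
      rw [Finset.mul_sum]; refine Finset.sum_congr rfl fun j _ => ?_
      ring
    rw [e1, e2]; ring

lemma cond_neg (N m : ℕ) (x : ℕ → ℝ) (hm : m ≤ N) (h : ∑ j ∈ Finset.range m, x j = 0) :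
    ∑ j ∈ Finset.range m, ∑ k ∈ Finset.range m, x j * x k * |(j : ℝ) - k| ≤ 0 := by
  have key : ∀ j ∈ Finset.range m, ∀ k ∈ Finset.range m, |(j : ℝ) - k| =
      ∑ r ∈ Finset.range N, ((if r < j then (1 : ℝ) else 0) + (if r < k then (1 : ℝ) else 0)
        - 2 * ((if r < j then (1 : ℝ) else 0) * (if r < k then (1 : ℝ) else 0))) := by
    have cnt : ∀ j ≤ N, ∑ r ∈ Finset.range N, (if r < j then (1 : ℝ) else 0) = j := by
      intro j hj
      rw [← Finset.sum_filter]
      have : (Finset.range N).filter (fun r => r < j) = Finset.range j := by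
        ext r; simp; omega
      rw [this]; simp
    intro j hj k hk
    simp only [Finset.mem_range] at hj hk
    have e : ∀ r, (if r < j then (1 : ℝ) else 0) * (if r < k then (1 : ℝ) else 0) =
        if r < min j k then 1 else 0 := by
      intro r; by_cases h1 : r < j <;> by_cases h2 : r < k <;> simp [h1, h2]
    simp only [e]
    rw [Finset.sum_sub_distrib, Finset.sum_add_distrib, ← Finset.mul_sum, cnt j (by omega), cnt k (by omega),
      cnt _ (by omega)]
    rcases le_total j k with h | h
    · have h' : (j : ℝ) ≤ k := by exact_mod_cast h
      rw [min_eq_left h, abs_of_nonpos (by linarith)]; ring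
    · have h' : (k : ℝ) ≤ j := by exact_mod_cast h
      rw [min_eq_right h, abs_of_nonneg (by linarith)]; ring
  have : ∑ j ∈ Finset.range m, ∑ k ∈ Finset.range m, x j * x k * |(j : ℝ) - k| =
      ∑ r ∈ Finset.range N, -2 * (∑ j ∈ Finset.range m, x j * (if r < j then (1 : ℝ) else 0)) ^ 2 := by
    have : ∑ j ∈ Finset.range m, ∑ k ∈ Finset.range m, x j * x k * |(j : ℝ) - k| =
      ∑ j ∈ Finset.range m, ∑ k ∈ Finset.range m, ∑ r ∈ Finset.range N,
       ((x j * (if r < j then (1 : ℝ) else 0)) * x k + x j * (x k * (if r < k then (1 : ℝ) else 0))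
        - 2 * ((x j * (if r < j then (1 : ℝ) else 0)) * (x k * (if r < k then (1 : ℝ) else 0)))) := by
      refine Finset.sum_congr rfl fun j hj => Finset.sum_congr rfl fun k hk => ?_
      rw [key j hj k hk, Finset.mul_sum]
      refine Finset.sum_congr rfl fun r _ => ?_
      ring
    rw [this]
    rw [Finset.sum_congr rfl fun j _ => Finset.sum_comm, Finset.sum_comm]
    refine Finset.sum_congr rfl fun r _ => ?_
    simp only [Finset.sum_sub_distrib, Finset.sum_add_distrib, ← Finset.mul_sum, ← Finset.sum_mul, h]
    ring
  rw [this]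
  exact Finset.sum_nonpos fun r _ => by nlinarith [sq_nonneg (∑ j ∈ Finset.range m, x j * (if r < j then (1 : ℝ) else 0))]

lemma rev_cs {E : Type*} [AddCommGroup E] [Module ℝ E] (B : E →ₗ[ℝ] E →ₗ[ℝ] ℝ) (l : E →ₗ[ℝ] ℝ)
    (hs : ∀ x y, B x y = B y x) (hl : ∀ x, l x = 0 → B x x ≤ 0) (w x : E) (hw : 0 ≤ B w w) :
    B w w * B x x ≤ (B x w) ^ 2 := by
  rcases hw.eq_or_lt with h | h
  · rw [← h]; simp; positivity
  have hlw : l w ≠ 0 := fun h0 => absurd (hl w h0) (not_le.2 h)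
  have := hl (x - (l x / l w) • w) (by simp [hlw])
  simp only [map_sub, map_smul, LinearMap.sub_apply, LinearMap.smul_apply, smul_eq_mul, hs w x] at this
  set t := l x / l w
  nlinarith [sq_nonneg (B x w - t * B w w)]

/-- the mixed area form in zonogon parameters -/
noncomputable def zform (τ : ℕ → ℝ) (m : ℕ) : (ℝ × (ℕ → ℝ)) →ₗ[ℝ] (ℝ × (ℕ → ℝ)) →ₗ[ℝ] ℝ :=
  LinearMap.mk₂ ℝ (fun u v => 2 * (u.1 * ∑ j ∈ Finset.range m, v.2 j + v.1 * ∑ j ∈ Finset.range m, u.2 j) +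
      2 * ∑ j ∈ Finset.range m, ∑ k ∈ Finset.range m, u.2 j * v.2 k * |τ j - τ k|)
    (by intro u u' v; simp only [Prod.fst_add, Prod.snd_add, Pi.add_apply, add_mul, Finset.sum_add_distrib]; ring)
    (by
      intro r u v
      simp only [Prod.smul_fst, Prod.smul_snd, Pi.smul_apply, smul_eq_mul, mul_assoc, ← Finset.mul_sum]; ring)
    (by intro u v v'; simp only [Prod.fst_add, Prod.snd_add, Pi.add_apply, add_mul, mul_add, Finset.sum_add_distrib]; ring)
    (by
      intro r u v
      simp only [Prod.smul_fst, Prod.smul_snd, Pi.smul_apply, smul_eq_mul, mul_assoc, mul_left_comm _ r, ← Finset.mul_sum]; ring)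

lemma zform_apply (τ : ℕ → ℝ) (m : ℕ) (u v : ℝ × (ℕ → ℝ)) : zform τ m u v =
    2 * (u.1 * ∑ j ∈ Finset.range m, v.2 j + v.1 * ∑ j ∈ Finset.range m, u.2 j) +
      2 * ∑ j ∈ Finset.range m, ∑ k ∈ Finset.range m, u.2 j * v.2 k * |τ j - τ k| := rfl

lemma zform_symm (τ : ℕ → ℝ) (m : ℕ) (u v : ℝ × (ℕ → ℝ)) : zform τ m u v = zform τ m v u := by
  rw [zform_apply, zform_apply, Finset.sum_comm]
  congr 1
  · ring
  · congr 1
    refine Finset.sum_congr rfl fun j hj => Finset.sum_congr rfl fun k hk => ?_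
    rw [abs_sub_comm]; ring

lemma zform_rev (m : ℕ) {τ : ℕ → ℝ} {δ b : ℝ} (hδ : 0 ≤ δ) (hτ : ∀ j, τ j = b + j * δ)
    (w x : ℝ × (ℕ → ℝ)) (hw : 0 ≤ zform τ m w w) :
    zform τ m w w * zform τ m x x ≤ (zform τ m x w) ^ 2 := by
  refine rev_cs (zform τ m) (∑ j ∈ Finset.range m, LinearMap.proj j ∘ₗ LinearMap.snd ℝ ℝ (ℕ → ℝ)) (zform_symm τ m) ?_ w x hw
  intro y hy
  simp at hy
  rw [zform_apply, hy]
  have : ∑ j ∈ Finset.range m, ∑ k ∈ Finset.range m, y.2 j * y.2 k * |τ j - τ k| =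
      δ * ∑ j ∈ Finset.range m, ∑ k ∈ Finset.range m, y.2 j * y.2 k * |(j : ℝ) - k| := by
    simp only [Finset.mul_sum]
    refine Finset.sum_congr rfl fun j hj => Finset.sum_congr rfl fun k hk => ?_
    have : τ j - τ k = (j - k) * δ := by rw [hτ, hτ]; ring
    rw [this, abs_mul, abs_of_nonneg hδ]; ring
  rw [this]
  nlinarith [cond_neg m m y.2 le_rfl hy]

lemma zform_sum (τ : ℕ → ℝ) (m n : ℕ) (w₀ : ℝ × (ℕ → ℝ)) (w : Fin n → ℝ × (ℕ → ℝ)) (c : Fin n → ℝ)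
    {δ b : ℝ} (hδ : 0 ≤ δ) (hτ : ∀ j, τ j = b + j * δ) (hw : 0 ≤ zform τ m w₀ w₀) :
    zform τ m w₀ w₀ * ∑ i, ∑ j, c i * c j * zform τ m (w i) (w j) ≤ (∑ k, c k * zform τ m (w k) w₀) ^ 2 := by
  have := zform_rev m hδ hτ w₀ (∑ i, c i • w i) hw
  simp only [map_sum, map_smul, LinearMap.sum_apply, LinearMap.smul_apply, smul_eq_mul] at this
  convert this using 2
  rw [Finset.sum_comm]
  refine Finset.sum_congr rfl fun i _ => ?_
  rw [Finset.mul_sum]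
  exact Finset.sum_congr rfl fun j _ => by ring

/-- telescoping with a sign change -/
lemma sign_tele (u : ℕ → ℝ) (k n : ℕ) (h : k + 1 ≤ n) :
    ∑ j ∈ Finset.range n, (u (j + 1) - u j) * (if j ≤ k then (1 : ℝ) else -1) = 2 * u (k + 1) - u 0 - u n := by
  induction n, h using Nat.le_induction with
  | base =>
    rw [Finset.sum_congr rfl (g := fun j => u (j + 1) - u j), Finset.sum_range_sub]
    · ring
    · intro j hj
      simp only [Finset.mem_range] at hj
      rw [if_pos (by omega)]; ring
  | succ n hn ih =>
    rw [Finset.sum_range_succ, ih, if_neg (by omega)]; ring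

/-- A norm-like function on the plane -/
structure NormLike (h : ℝ → ℝ → ℝ) (μ : ℝ) : Prop where
  sub : ∀ s t s' t', h (s + s') (t + t') ≤ h s t + h s' t'
  hom : ∀ r s t, h (r * s) (r * t) = |r| * h s t
  pos : 0 < μ
  low : ∀ s t, μ * (|s| + |t|) ≤ h s t

/-- nodes -/
noncomputable def nd (p j : ℕ) : ℝ := -(p : ℝ) + j * (1 / (p : ℝ))

/-- slopes -/
noncomputable def slp (h : ℝ → ℝ → ℝ) (p k : ℕ) : ℝ :=
  if k = 0 then -(h 1 0) else if k ≤ 2 * p ^ 2 then (h (nd p k) 1 - h (nd p (k - 1)) 1) * p else h 1 0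

/-- coefficients -/
noncomputable def cf (h : ℝ → ℝ → ℝ) (p j : ℕ) : ℝ :=
  if j < 2 * p ^ 2 + 1 then (slp h p (j + 1) - slp h p j) / 2 else 0

/-- vertical coefficient -/
noncomputable def af (h : ℝ → ℝ → ℝ) (p : ℕ) : ℝ := (h p 1 + h (-p) 1) / 2 - h 1 0 * p

lemma nd_succ (p j : ℕ) : nd p (j + 1) = nd p j + 1 / p := by
  simp only [nd]; push_cast; ring

lemma nd_last (p : ℕ) (hp : 0 < p) : nd p (2 * p ^ 2) = p := by
  have : (p : ℝ) ≠ 0 := by positivity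
  simp only [nd]; push_cast; field_simp; ring


lemma NormLike.horiz {h : ℝ → ℝ → ℝ} {μ : ℝ} (H : NormLike h μ) (s : ℝ) : h s 0 = |s| * h 1 0 := by
  have := H.hom s 1 0; simpa using this

lemma NormLike.L_pos {h : ℝ → ℝ → ℝ} {μ : ℝ} (H : NormLike h μ) : 0 < h 1 0 := by
  have := H.low 1 0
  have := H.pos
  simp at *; linarith

lemma NormLike.lip {h : ℝ → ℝ → ℝ} {μ : ℝ} (H : NormLike h μ) (s s' : ℝ) : h s' 1 ≤ h s 1 + h 1 0 * |s' - s| := by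
  have := H.sub s 1 (s' - s) 0
  rw [H.horiz] at this
  simp at this; linarith

lemma NormLike.mid {h : ℝ → ℝ → ℝ} {μ : ℝ} (H : NormLike h μ) (s d : ℝ) : 2 * h s 1 ≤ h (s + d) 1 + h (s - d) 1 := by
  have := H.sub (s + d) 1 (s - d) 1
  have e := H.hom 2 s 1
  rw [abs_of_pos two_pos] at e
  rw [← e]
  convert this using 2 <;> ring

lemma NormLike.af_nonneg {h : ℝ → ℝ → ℝ} {μ : ℝ} (H : NormLike h μ) (p : ℕ) : 0 ≤ af h p := by
  have h1 := H.sub p 1 p (-1)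
  have h2 := H.hom (-1) (-p) 1
  have h3 := H.horiz (p + p)
  rw [abs_of_nonneg (by positivity)] at h3
  simp at h1 h2
  rw [af]; linarith

lemma NormLike.cf_nonneg {h : ℝ → ℝ → ℝ} {μ : ℝ} (H : NormLike h μ) (p : ℕ) (hp : 0 < p) (j : ℕ) : 0 ≤ cf h p j := by
  have hp' : (0 : ℝ) < p := by positivity
  have hL := H.L_pos
  have hs : ∀ k, |slp h p k| ≤ h 1 0 := by
    intro k
    rw [slp]
    split_ifs with h1 h2
    · rw [abs_neg, abs_of_pos hL]
    · obtain ⟨k, rfl⟩ := Nat.exists_eq_succ_of_ne_zero h1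
      simp only [Nat.succ_eq_add_one, Nat.add_sub_cancel]
      have e1 := H.lip (nd p k) (nd p (k + 1))
      have e2 := H.lip (nd p (k + 1)) (nd p k)
      rw [abs_sub_comm] at e2
      have : nd p (k + 1) - nd p k = 1 / p := by rw [nd_succ]; ring
      rw [this, abs_of_nonneg (by positivity)] at e1 e2
      have e3 : h 1 0 = (h 1 0 * (1 / p)) * p := by field_simp
      rw [abs_mul, abs_of_pos hp', e3]
      apply mul_le_mul_of_nonneg_right _ hp'.le
      rw [abs_le]; constructor <;> linarith
    · rw [abs_of_pos hL]
  rw [cf]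
  split_ifs with hj
  swap
  · exact le_rfl
  have h1 := abs_le.1 (hs j)
  have h2 := abs_le.1 (hs (j + 1))
  by_cases hj0 : j = 0
  · subst hj0
    have : slp h p 0 = - h 1 0 := by simp [slp]
    linarith
  by_cases hjl : j = 2 * p ^ 2
  · have : slp h p (j + 1) = h 1 0 := by rw [slp, if_neg (by omega), if_neg (by omega)]
    linarith
  · obtain ⟨k, rfl⟩ := Nat.exists_eq_succ_of_ne_zero hj0
    have e1 : ∀ k, k < 2 * p ^ 2 → slp h p (k + 1) = (h (nd p (k + 1)) 1 - h (nd p k) 1) * p := by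
      intro k hk
      rw [slp, if_neg (by omega), if_pos (by omega)]; simp
    simp only [Nat.succ_eq_add_one] at *
    rw [e1 _ (by omega), e1 _ (by omega)]
    have := H.mid (nd p (k + 1)) (1 / p)
    rw [← nd_succ] at this
    have e : nd p (k + 1) - 1 / p = nd p k := by rw [nd_succ]; ring
    rw [e] at this
    apply div_nonneg _ two_pos.le
    rw [← sub_mul]
    apply mul_nonneg _ hp'.le
    linarith

lemma cf_sum {h : ℝ → ℝ → ℝ} (p : ℕ) : ∑ j ∈ Finset.range (2 * p ^ 2 + 1), cf h p j = h 1 0 := by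
  rw [Finset.sum_congr rfl (g := fun j => (slp h p (j + 1) - slp h p j) / 2), ← Finset.sum_div, Finset.sum_range_sub]
  · simp [slp]
  · intro j hj; rw [cf, if_pos (by simpa using hj)]

lemma node_step {h : ℝ → ℝ → ℝ} (p : ℕ) (hp : 0 < p) (k : ℕ) (hk : k < 2 * p ^ 2) :
    ∑ j ∈ Finset.range (2 * p ^ 2 + 1), cf h p j * |nd p (k + 1) - nd p j| -
      ∑ j ∈ Finset.range (2 * p ^ 2 + 1), cf h p j * |nd p k - nd p j| = h (nd p (k + 1)) 1 - h (nd p k) 1 := by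
  have hp' : (0 : ℝ) < p := by positivity
  rw [← Finset.sum_sub_distrib]
  have : ∀ j ∈ Finset.range (2 * p ^ 2 + 1), cf h p j * |nd p (k + 1) - nd p j| - cf h p j * |nd p k - nd p j| =
      (slp h p (j + 1) - slp h p j) * (if j ≤ k then (1 : ℝ) else -1) * (1 / (2 * p)) := by
    intro j hj
    rw [cf, if_pos (by simpa using hj)]
    have e : ∀ i : ℕ, nd p i - nd p j = ((i : ℝ) - j) * (1 / p) := by intro i; simp only [nd]; ring
    rw [e, e, abs_mul, abs_mul, abs_of_pos (show (0 : ℝ) < 1 / p by positivity)]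
    split_ifs with h1
    · have : (j : ℝ) ≤ k := by exact_mod_cast h1
      rw [abs_of_nonneg (by push_cast; linarith), abs_of_nonneg (by linarith)]
      push_cast; field_simp; ring
    · have : (k : ℝ) + 1 ≤ j := by exact_mod_cast (by omega : k + 1 ≤ j)
      rw [abs_of_nonpos (by push_cast; linarith), abs_of_nonpos (by linarith)]
      push_cast; field_simp; ring
  rw [Finset.sum_congr rfl this, ← Finset.sum_mul, sign_tele _ _ _ (by omega)]
  have e0 : slp h p 0 = - h 1 0 := by simp [slp]
  have e1 : slp h p (2 * p ^ 2 + 1) = h 1 0 := by simp [slp]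
  have e2 : slp h p (k + 1) = (h (nd p (k + 1)) 1 - h (nd p k) 1) * p := by
    rw [slp, if_neg (by omega), if_pos (by omega)]; simp
  rw [e0, e1, e2]; field_simp; ring

/-- the interpolant -/
noncomputable def psi (h : ℝ → ℝ → ℝ) (p : ℕ) (s : ℝ) : ℝ :=
  af h p + ∑ j ∈ Finset.range (2 * p ^ 2 + 1), cf h p j * |s - nd p j|

lemma psi_node {h : ℝ → ℝ → ℝ} (p : ℕ) (hp : 0 < p) (k : ℕ) (hk : k ≤ 2 * p ^ 2) :
    psi h p (nd p k) = h (nd p k) 1 := by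
  have hp' : (0 : ℝ) < p := by positivity
  have step : ∀ k, k ≤ 2 * p ^ 2 → psi h p (nd p k) - h (nd p k) 1 = psi h p (nd p 0) - h (nd p 0) 1 := by
    intro k
    induction k with
    | zero => intro _; rfl
    | succ k ih =>
      intro hk
      have := node_step (h := h) p hp k (by omega)
      rw [← ih (by omega)]
      simp only [psi]; linarith
  have hl := step _ le_rfl
  have e0 : nd p 0 = -p := by simp [nd]
  have ends : psi h p (nd p 0) + psi h p (nd p (2 * p ^ 2)) = h (nd p 0) 1 + h (nd p (2 * p ^ 2)) 1 := by
    have : ∑ j ∈ Finset.range (2 * p ^ 2 + 1), cf h p j * |nd p 0 - nd p j| +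
        ∑ j ∈ Finset.range (2 * p ^ 2 + 1), cf h p j * |nd p (2 * p ^ 2) - nd p j| = h 1 0 * (2 * p) := by
      rw [← cf_sum (h := h) p, Finset.sum_mul, ← Finset.sum_add_distrib]
      refine Finset.sum_congr rfl fun j hj => ?_
      have e : ∀ i : ℕ, nd p i - nd p j = ((i : ℝ) - j) * (1 / p) := by intro i; simp only [nd]; ring
      have hj' : (j : ℝ) ≤ 2 * p ^ 2 := by
        simp only [Finset.mem_range] at hj
        exact_mod_cast (by omega : j ≤ 2 * p ^ 2)
      rw [e, e, abs_mul, abs_mul, abs_of_pos (show (0 : ℝ) < 1 / p by positivity), abs_of_nonpos (by simp),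
        abs_of_nonneg (by push_cast; linarith)]
      push_cast; field_simp; try ring
    simp only [psi]
    rw [nd_last p hp, e0] at *
    rw [af]; linarith
  have := step k hk
  linarith

lemma psi_lip {h : ℝ → ℝ → ℝ} {μ : ℝ} (H : NormLike h μ) (p : ℕ) (hp : 0 < p) (s s' : ℝ) : psi h p s' ≤ psi h p s + h 1 0 * |s' - s| := by
  rw [psi, psi, ← cf_sum (h := h) p, Finset.sum_mul, add_assoc, ← Finset.sum_add_distrib]
  refine add_le_add le_rfl (Finset.sum_le_sum fun j _ => ?_)
  rw [← mul_add]
  refine mul_le_mul_of_nonneg_left ?_ (H.cf_nonneg p hp j)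
  have := abs_add_le (s - nd p j) (s' - s)
  rwa [show s - nd p j + (s' - s) = s' - nd p j by ring] at this

lemma exists_node (p : ℕ) (hp : 0 < p) (s : ℝ) (hs : |s| ≤ p) : ∃ k ≤ 2 * p ^ 2, |s - nd p k| ≤ 1 / p := by
  have hp' : (0 : ℝ) < p := by positivity
  rw [abs_le] at hs
  have h0 : 0 ≤ (s + p) * p := mul_nonneg (by linarith) hp'.le
  refine ⟨⌊(s + p) * p⌋₊, ?_, ?_⟩
  · apply Nat.floor_le_of_le
    push_cast; nlinarith
  · have h1 := Nat.floor_le h0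
    have h2 := Nat.lt_floor_add_one ((s + p) * p)
    have : s - nd p ⌊(s + p) * p⌋₊ = ((s + p) * p - (⌊(s + p) * p⌋₊ : ℝ)) * (1 / p) := by
      simp only [nd]; field_simp; ring
    rw [this, abs_mul, abs_of_pos (show (0 : ℝ) < 1 / p by positivity), abs_of_nonneg (by linarith)]
    have : (0 : ℝ) < 1 / p := by positivity
    nlinarith

lemma psi_near {h : ℝ → ℝ → ℝ} {μ : ℝ} (H : NormLike h μ) (p : ℕ) (hp : 0 < p) (s : ℝ) (hs : |s| ≤ p) :
    |psi h p s - h s 1| ≤ 2 * h 1 0 / p := by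
  obtain ⟨k, hk, hd⟩ := exists_node p hp s hs
  have hL := H.L_pos
  have e := psi_node (h := h) p hp k hk
  have h1 := psi_lip H p hp (nd p k) s
  have h2 := psi_lip H p hp s (nd p k)
  have h3 := H.lip (nd p k) s
  have h4 := H.lip s (nd p k)
  rw [abs_sub_comm] at h2 h4
  have h5 : h 1 0 * |s - nd p k| ≤ h 1 0 * (1 / p) := mul_le_mul_of_nonneg_left hd hL.le
  have h6 : 2 * h 1 0 / p = h 1 0 * (1 / p) + h 1 0 * (1 / p) := by ring
  rw [h6, abs_le]
  constructor <;> linarith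

lemma psi_far {h : ℝ → ℝ → ℝ} {μ : ℝ} (H : NormLike h μ) (p : ℕ) (hp : 0 < p) (s : ℝ) :
    |psi h p s - h s 1| ≤ 2 * h 0 1 := by
  have hp' : (0 : ℝ) < p := by positivity
  have hz : nd p (p ^ 2) = 0 := by
    simp only [nd]; push_cast; field_simp; ring
  have e := psi_node (h := h) p hp (p ^ 2) (by omega)
  rw [hz] at e
  have h1 := psi_lip H p hp 0 s
  have h2 := H.lip 0 s
  have h3 : h 1 0 * |s| - h 0 1 ≤ h s 1 := by
    have := H.sub s 1 0 (-1)
    have e := H.hom (-1) 0 1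
    rw [abs_neg, abs_one] at e
    simp at this e
    rw [H.horiz s] at this; linarith
  have h4 : h 1 0 * |s| ≤ psi h p s + psi h p 0 := by
    have ha := H.af_nonneg p
    rw [← cf_sum (h := h) p, Finset.sum_mul]
    have : ∑ j ∈ Finset.range (2 * p ^ 2 + 1), cf h p j * |s| ≤
        ∑ j ∈ Finset.range (2 * p ^ 2 + 1), (cf h p j * |s - nd p j| + cf h p j * |0 - nd p j|) := by
      refine Finset.sum_le_sum fun j _ => ?_
      rw [← mul_add]
      refine mul_le_mul_of_nonneg_left ?_ (H.cf_nonneg p hp j)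
      have := abs_sub (s - nd p j) (0 - nd p j)
      rwa [show s - nd p j - (0 - nd p j) = s by ring] at this
    rw [Finset.sum_add_distrib] at this
    simp only [psi]; linarith
  rw [sub_zero] at h1 h2
  rw [abs_le]
  constructor <;> linarith

/-- support function of the zonogon -/
noncomputable def W (h : ℝ → ℝ → ℝ) (p : ℕ) (s t : ℝ) : ℝ :=
  af h p * |t| + ∑ j ∈ Finset.range (2 * p ^ 2 + 1), cf h p j * |s - nd p j * t|

lemma W_zero {h : ℝ → ℝ → ℝ} {μ : ℝ} (H : NormLike h μ) (p : ℕ) (s : ℝ) : W h p s 0 = h s 0 := by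
  rw [H.horiz, W, ← cf_sum (h := h) p, Finset.mul_sum]
  simp [mul_comm]

lemma W_ne {h : ℝ → ℝ → ℝ} (p : ℕ) (s t : ℝ) (ht : t ≠ 0) : W h p s t = |t| * psi h p (s / t) := by
  rw [W, psi, mul_add, Finset.mul_sum, mul_comm]
  congr 1
  refine Finset.sum_congr rfl fun j _ => ?_
  have : s - nd p j * t = t * (s / t - nd p j) := by field_simp
  rw [this, abs_mul]; ring

lemma W_approx {h : ℝ → ℝ → ℝ} {μ : ℝ} (H : NormLike h μ) {ε : ℝ} (hε : 0 < ε) :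
    ∀ᶠ p : ℕ in Filter.atTop, ∀ s t, |W h p s t - h s t| ≤ ε * h s t := by
  have t1 : ∀ᶠ p : ℕ in Filter.atTop, 2 * h 1 0 / p ≤ ε * μ := by
    have := (tendsto_const_div_atTop_nhds_zero_nat (2 * h 1 0)).eventually_lt_const (mul_pos hε H.pos)
    exact this.mono fun _ h => h.le
  have t2 : ∀ᶠ p : ℕ in Filter.atTop, 2 * h 0 1 / p ≤ ε * μ := by
    have := (tendsto_const_div_atTop_nhds_zero_nat (2 * h 0 1)).eventually_lt_const (mul_pos hε H.pos)
    exact this.mono fun _ h => h.le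
  filter_upwards [t1, t2, Filter.eventually_gt_atTop 0] with p h1 h2 hp s t
  have hp' : (0 : ℝ) < p := by positivity
  have hnn : ∀ s t, 0 ≤ h s t := fun s t => le_trans (mul_nonneg H.pos.le (by positivity)) (H.low s t)
  by_cases ht : t = 0
  · subst ht
    rw [W_zero H, sub_self, abs_zero]
    exact mul_nonneg hε.le (hnn _ _)
  have e : h s t = |t| * h (s / t) 1 := by
    rw [← H.hom, mul_one]; congr 1; field_simp
  rw [W_ne _ _ _ ht, e, ← mul_sub, abs_mul, abs_abs, mul_left_comm]
  refine mul_le_mul_of_nonneg_left ?_ (abs_nonneg t)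
  generalize s / t = r
  have hlow := H.low r 1
  rw [abs_one] at hlow
  have hlow' := mul_le_mul_of_nonneg_left hlow hε.le
  have hem := mul_pos hε H.pos
  rcases le_total |r| p with hr | hr
  · refine (psi_near H p hp r hr).trans (h1.trans (le_trans ?_ hlow'))
    nlinarith [abs_nonneg r]
  · refine (psi_far H p hp r).trans (le_trans ?_ hlow')
    rw [div_le_iff₀ hp'] at h2
    nlinarith

/-- support function -/
noncomputable def hK (K : Set (ℝ × ℝ)) (s t : ℝ) : ℝ := sSup (lf s t '' K)

lemma lf_cont (s t : ℝ) : Continuous (lf s t) := LinearMap.continuous_of_finiteDimensional _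

lemma hK_le {K : Set (ℝ × ℝ)} (hc : IsCompact K) (s t : ℝ) {x : ℝ × ℝ} (hx : x ∈ K) : lf s t x ≤ hK K s t :=
  le_csSup (hc.image (lf_cont s t)).bddAbove ⟨x, hx, rfl⟩

lemma hK_attain {K : Set (ℝ × ℝ)} (hc : IsCompact K) (hn : K.Nonempty) (s t : ℝ) :
    ∃ x ∈ K, lf s t x = hK K s t :=
  (hc.image (lf_cont s t)).sSup_mem (hn.image _)

lemma zero_mem_int {K : Set (ℝ × ℝ)} (hc : Convex ℝ K) (hs : -K = K)
    (hv : 0 < (volume K).toReal) : (0 : ℝ × ℝ) ∈ interior K := by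
  have hne : (interior K).Nonempty := by
    rw [nonempty_iff_ne_empty]
    intro h0
    have h1 : volume (frontier K) = 0 := hc.addHaar_frontier volume
    have h2 : volume K ≤ 0 := by
      rw [← h1]
      apply measure_mono
      intro x hx
      rw [frontier, h0]
      exact ⟨subset_closure hx, by simp⟩
    have : volume K = 0 := le_antisymm h2 bot_le
    simp [this] at hv
  obtain ⟨x, hx⟩ := hne
  have hx' : -x ∈ interior K := by
    have h1 : (Homeomorph.neg (ℝ × ℝ)) ⁻¹' interior K = interior (-K) :=
      (Homeomorph.neg (ℝ × ℝ)).preimage_interior K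
    rw [hs] at h1
    rw [← h1]
    simpa using hx
  have := hc.interior hx hx' (a := 1 / 2) (b := 1 / 2) (by norm_num) (by norm_num) (by norm_num)
  simpa using this

lemma hK_normLike {K : Set (ℝ × ℝ)} (hn : K.Nonempty) (hk : IsCompact K) (hc : Convex ℝ K) (hs : -K = K)
    (hv : 0 < (volume K).toReal) : ∃ μ, NormLike (hK K) μ := by
  have hz := zero_mem_int hc hs hv
  rw [mem_interior_iff_mem_nhds, Metric.nhds_basis_closedBall.mem_iff] at hz
  obtain ⟨r, hr, hb⟩ := hz
  have hneg : ∀ x ∈ K, -x ∈ K := by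
    intro x hx
    rw [← hs]; simpa using hx
  have hle : ∀ r s t, hK K (r * s) (r * t) ≤ |r| * hK K s t := by
    intro r s t
    obtain ⟨x, hx, e⟩ := hK_attain hk hn (r * s) (r * t)
    rw [← e]
    have e2 : lf (r * s) (r * t) x = r * lf s t x := by simp only [lf_apply]; ring
    rw [e2]
    have h1 := hK_le hk s t hx
    have h2 := hK_le hk s t (hneg x hx)
    rw [map_neg] at h2
    calc r * lf s t x ≤ |r * lf s t x| := le_abs_self _
      _ = |r| * |lf s t x| := abs_mul _ _
      _ ≤ _ := mul_le_mul_of_nonneg_left (abs_le.2 ⟨by linarith, h1⟩) (abs_nonneg r)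
  have hlow : ∀ s t, r * (|s| + |t|) ≤ hK K s t := by
    intro s t
    have : ∀ s : ℝ, ∃ σ : ℝ, |σ| ≤ r ∧ s * σ = r * |s| := by
      intro s
      rcases le_total 0 s with h | h
      · exact ⟨r, (abs_of_pos hr).le, by rw [abs_of_nonneg h]; ring⟩
      · exact ⟨-r, by rw [abs_neg]; exact (abs_of_pos hr).le, by rw [abs_of_nonpos h]; ring⟩
    obtain ⟨σ, h1, e1⟩ := this s
    obtain ⟨σ', h2, e2⟩ := this t
    have hm : ((σ, σ') : ℝ × ℝ) ∈ K := by
      apply hb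
      rw [mem_closedBall_zero_iff, Prod.norm_def]
      exact max_le h1 h2
    have := hK_le hk s t hm
    rw [lf_apply] at this
    simp only [e1, e2] at this
    linarith
  refine ⟨r, ⟨?_, ?_, hr, hlow⟩⟩
  · intro s t s' t'
    obtain ⟨x, hx, e⟩ := hK_attain hk hn (s + s') (t + t')
    have h1 := hK_le hk s t hx
    have h2 := hK_le hk s' t' hx
    rw [← e]
    simp only [lf_apply] at *
    linarith
  · intro r s t
    refine le_antisymm (hle r s t) ?_
    by_cases h0 : r = 0
    · subst h0
      have := hlow (0 * s) (0 * t)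
      simp at this
      simpa using this
    · have := hle r⁻¹ (r * s) (r * t)
      rw [inv_mul_cancel_left₀ h0, inv_mul_cancel_left₀ h0, abs_inv] at this
      have hp := abs_pos.2 h0
      calc |r| * hK K s t ≤ |r| * (|r|⁻¹ * hK K (r * s) (r * t)) := mul_le_mul_of_nonneg_left this hp.le
        _ = _ := by field_simp

/-- approximating zonogon -/
noncomputable def Zp (K : Set (ℝ × ℝ)) (p : ℕ) : Set (ℝ × ℝ) :=
  zon (af (hK K) p) (cf (hK K) p) (nd p) (2 * p ^ 2 + 1)

lemma subset_of_support {A B : Set (ℝ × ℝ)} (hB : IsCompact B) (hc : Convex ℝ B)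
    (h : ∀ s t, ∀ x ∈ A, ∃ y ∈ B, lf s t x ≤ lf s t y) : A ⊆ B := by
  intro x hx
  by_contra hxB
  obtain ⟨f, u, h1, h2⟩ := geometric_hahn_banach_closed_point hc hB.isClosed hxB
  have e : ∀ y, f y = lf (f (1, 0)) (f (0, 1)) y := by
    intro y
    have : y = y.1 • ((1 : ℝ), (0 : ℝ)) + y.2 • ((0 : ℝ), (1 : ℝ)) := by ext <;> simp
    rw [lf_apply]
    conv_lhs => rw [this]
    rw [map_add, map_smul, map_smul]
    simp [mul_comm]
  obtain ⟨y, hy, hxy⟩ := h (f (1, 0)) (f (0, 1)) x hx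
  rw [← e, ← e] at hxy
  linarith [h1 y hy]

lemma Zp_approx {K : Set (ℝ × ℝ)} (hn : K.Nonempty) (hk : IsCompact K) (hc : Convex ℝ K) {μ : ℝ}
    (H : NormLike (hK K) μ) {ε : ℝ} (hε : 0 < ε) (hε1 : ε < 1) :
    ∀ᶠ p : ℕ in Filter.atTop, (1 - ε) • K ⊆ Zp K p ∧ Zp K p ⊆ (1 + ε) • K := by
  filter_upwards [W_approx H hε, Filter.eventually_gt_atTop 0] with p hW hp
  have hWn : ∀ s t, 0 ≤ W (hK K) p s t := fun s t =>
    add_nonneg (mul_nonneg (H.af_nonneg p) (abs_nonneg _))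
      (Finset.sum_nonneg fun j _ => mul_nonneg (H.cf_nonneg p hp j) (abs_nonneg _))
  have himg : ∀ s t, lf s t '' Zp K p = Icc (-W (hK K) p s t) (W (hK K) p s t) := fun s t =>
    lf_zon (nd p) (2 * p ^ 2 + 1) (H.af_nonneg p) (H.cf_nonneg p hp) s t
  constructor
  · refine subset_of_support (zon_compact ..) (zon_convex ..) ?_
    rintro s t _ ⟨x, hx, rfl⟩
    have hm : W (hK K) p s t ∈ lf s t '' Zp K p := by
      rw [himg]; exact ⟨by linarith [hWn s t], le_rfl⟩
    obtain ⟨y, hy, e⟩ := hm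
    refine ⟨y, hy, ?_⟩
    rw [e]
    simp only [map_smul, smul_eq_mul]
    have h1 := (abs_le.1 (hW s t)).1
    have h2 := mul_le_mul_of_nonneg_left (hK_le hk s t hx) (by linarith : 0 ≤ 1 - ε)
    linarith
  · refine subset_of_support (hk.smul _) (hc.smul _) ?_
    intro s t x hx
    have hm : lf s t x ∈ lf s t '' Zp K p := ⟨x, hx, rfl⟩
    rw [himg] at hm
    obtain ⟨y, hy, e⟩ := hK_attain hk hn s t
    refine ⟨(1 + ε) • y, ⟨y, hy, rfl⟩, ?_⟩
    rw [map_smul, e, smul_eq_mul]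
    have h1 := (abs_le.1 (hW s t)).2
    linarith [hm.2]

lemma vol_smul {r : ℝ} (hr : 0 ≤ r) (K : Set (ℝ × ℝ)) : (volume (r • K)).toReal = r ^ 2 * (volume K).toReal := by
  rw [Measure.addHaar_smul, ENNReal.toReal_mul, ENNReal.toReal_ofReal (abs_nonneg _), Module.finrank_prod]
  simp

lemma tendsto_of_sandwich {K : Set (ℝ × ℝ)} (hk : IsCompact K) {Z : ℕ → Set (ℝ × ℝ)}
    (hZ : ∀ ε : ℝ, 0 < ε → ε < 1 → ∀ᶠ p in Filter.atTop, (1 - ε) • K ⊆ Z p ∧ Z p ⊆ (1 + ε) • K) :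
    Filter.Tendsto (fun p => (volume (Z p)).toReal) Filter.atTop (nhds (volume K).toReal) := by
  rw [Metric.tendsto_nhds]
  intro η hη
  set V := (volume K).toReal with hV
  have hV0 : 0 ≤ V := ENNReal.toReal_nonneg
  obtain ⟨ε, h0, h1, h2⟩ : ∃ ε : ℝ, 0 < ε ∧ ε < 1 ∧ 3 * ε * V < η := by
    refine ⟨min (1 / 2) (η / (6 * (V + 1))), by positivity, by
      exact lt_of_le_of_lt (min_le_left _ _) (by norm_num), ?_⟩
    have : min (1 / 2) (η / (6 * (V + 1))) ≤ η / (6 * (V + 1)) := min_le_right _ _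
    rw [le_div_iff₀ (by positivity)] at this
    have hpos : 0 < min (1 / 2) (η / (6 * (V + 1))) := by positivity
    nlinarith
  filter_upwards [hZ ε h0 h1] with p hp
  have hfin : volume ((1 + ε) • K) ≠ ⊤ := (hk.smul _).measure_ne_top
  have a1 := ENNReal.toReal_mono (ne_top_of_le_ne_top hfin (measure_mono hp.2)) (measure_mono (μ := volume) hp.1)
  have a2 := ENNReal.toReal_mono hfin (measure_mono (μ := volume) hp.2)
  rw [vol_smul (by linarith), ← hV] at a1 a2
  rw [Real.dist_eq, abs_lt]
  have : ε ^ 2 * V ≤ ε * V := mul_le_mul_of_nonneg_right (by nlinarith) hV0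
  have : 0 ≤ ε ^ 2 * V := by positivity
  constructor <;> nlinarith

lemma tendsto_mixed {K L : Set (ℝ × ℝ)} {Z Y : ℕ → Set (ℝ × ℝ)} (hk : IsCompact K) (hl : IsCompact L)
    (hZ : ∀ ε : ℝ, 0 < ε → ε < 1 → ∀ᶠ p in Filter.atTop, (1 - ε) • K ⊆ Z p ∧ Z p ⊆ (1 + ε) • K)
    (hY : ∀ ε : ℝ, 0 < ε → ε < 1 → ∀ᶠ p in Filter.atTop, (1 - ε) • L ⊆ Y p ∧ Y p ⊆ (1 + ε) • L) :
    Filter.Tendsto (fun p => mixedArea (Z p) (Y p)) Filter.atTop (nhds (mixedArea K L)) := by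
  unfold mixedArea
  refine (((tendsto_of_sandwich (hk.add hl) ?_).sub (tendsto_of_sandwich hk hZ)).sub
    (tendsto_of_sandwich hl hY)).div_const 2
  intro ε h0 h1
  filter_upwards [hZ ε h0 h1, hY ε h0 h1] with p a b
  rw [smul_add, smul_add]
  exact ⟨add_subset_add a.1 b.1, add_subset_add a.2 b.2⟩

lemma vol_zon_form {a : ℝ} {c : ℕ → ℝ} (τ : ℕ → ℝ) (m : ℕ) (ha : 0 ≤ a) (hc : ∀ j, 0 ≤ c j) :
    (volume (zon a c τ m)).toReal = zform τ m (a, c) (a, c) := by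
  rw [vol_zon τ m ha hc, zform_apply]; ring

lemma mixed_zon {a a' : ℝ} {c c' : ℕ → ℝ} (τ : ℕ → ℝ) (m : ℕ) (ha : 0 ≤ a) (ha' : 0 ≤ a')
    (hc : ∀ j, 0 ≤ c j) (hc' : ∀ j, 0 ≤ c' j) :
    mixedArea (zon a c τ m) (zon a' c' τ m) = zform τ m (a, c) (a', c') := by
  rw [mixedArea, zon_add τ m ha ha' hc hc', vol_zon_form τ m ha hc, vol_zon_form τ m ha' hc',
    vol_zon_form (c := c + c') τ m (add_nonneg ha ha') (fun j => add_nonneg (hc j) (hc' j))]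
  have : ((a + a', c + c') : ℝ × (ℕ → ℝ)) = (a, c) + (a', c') := rfl
  rw [this]
  simp only [map_add, LinearMap.add_apply]
  rw [zform_symm τ m (a', c') (a, c)]; ring

/-- Extended Minkowski inequality with arbitrary real coefficients: for symmetric plane
convex bodies `K₀, K₁, …, Kₙ` of positive area and any `c₁, …, cₙ ∈ ℝ`,
`a(K₀) Σᵢⱼ cᵢcⱼ a(Kᵢ,Kⱼ) ≤ (Σₖ cₖ a(Kₖ,K₀))²`. -/
theorem extended_minkowski_inequality
    (n : ℕ) (K₀ : Set (ℝ × ℝ)) (K : Fin n → Set (ℝ × ℝ))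
    (hK₀ : K₀.Nonempty ∧ IsCompact K₀ ∧ Convex ℝ K₀ ∧ -K₀ = K₀ ∧ 0 < (volume K₀).toReal)
    (hK : ∀ i, (K i).Nonempty ∧ IsCompact (K i) ∧ Convex ℝ (K i) ∧ -(K i) = K i ∧
      0 < (volume (K i)).toReal)
    (c : Fin n → ℝ) :
    (volume K₀).toReal * ∑ i, ∑ j, c i * c j * mixedArea (K i) (K j) ≤
      (∑ k, c k * mixedArea (K k) K₀) ^ 2 := by
  obtain ⟨n0, k0, c0, s0, v0⟩ := hK₀
  obtain ⟨μ₀, H₀⟩ := hK_normLike n0 k0 c0 s0 v0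
  have hex : ∀ i, ∃ μ, NormLike (_root_.hK (K i)) μ := fun i =>
    hK_normLike (hK i).1 (hK i).2.1 (hK i).2.2.1 (hK i).2.2.2.1 (hK i).2.2.2.2
  choose μ H using hex
  have ap0 : ∀ ε : ℝ, 0 < ε → ε < 1 → ∀ᶠ p in Filter.atTop, (1 - ε) • K₀ ⊆ Zp K₀ p ∧ Zp K₀ p ⊆ (1 + ε) • K₀ :=
    fun ε h0 h1 => Zp_approx n0 k0 c0 H₀ h0 h1
  have ap : ∀ i, ∀ ε : ℝ, 0 < ε → ε < 1 →
      ∀ᶠ p in Filter.atTop, (1 - ε) • K i ⊆ Zp (K i) p ∧ Zp (K i) p ⊆ (1 + ε) • K i :=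
    fun i ε h0 h1 => Zp_approx (hK i).1 (hK i).2.1 (hK i).2.2.1 (H i) h0 h1
  have L : Filter.Tendsto (fun p => (volume (Zp K₀ p)).toReal *
      ∑ i, ∑ j, c i * c j * mixedArea (Zp (K i) p) (Zp (K j) p)) Filter.atTop
      (nhds ((volume K₀).toReal * ∑ i, ∑ j, c i * c j * mixedArea (K i) (K j))) :=
    (tendsto_of_sandwich k0 ap0).mul (tendsto_finsetSum _ fun i _ => tendsto_finsetSum _ fun j _ =>
      (tendsto_mixed (hK i).2.1 (hK j).2.1 (ap i) (ap j)).const_mul _)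
  have R : Filter.Tendsto (fun p => (∑ k, c k * mixedArea (Zp (K k) p) (Zp K₀ p)) ^ 2) Filter.atTop
      (nhds ((∑ k, c k * mixedArea (K k) K₀) ^ 2)) :=
    (tendsto_finsetSum _ fun k _ => (tendsto_mixed (hK k).2.1 k0 (ap k) ap0).const_mul _).pow 2
  refine le_of_tendsto_of_tendsto L R ?_
  filter_upwards [Filter.eventually_gt_atTop 0] with p hp
  have hv := vol_zon_form (nd p) (2 * p ^ 2 + 1) (H₀.af_nonneg p) (H₀.cf_nonneg p hp)
  have hm : ∀ i j, mixedArea (Zp (K i) p) (Zp (K j) p) = _ := fun i j =>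
    mixed_zon (nd p) (2 * p ^ 2 + 1) ((H i).af_nonneg p) ((H j).af_nonneg p) ((H i).cf_nonneg p hp)
      ((H j).cf_nonneg p hp)
  have hm0 : ∀ i, mixedArea (Zp (K i) p) (Zp K₀ p) = _ := fun i =>
    mixed_zon (nd p) (2 * p ^ 2 + 1) ((H i).af_nonneg p) (H₀.af_nonneg p) ((H i).cf_nonneg p hp)
      (H₀.cf_nonneg p hp)
  simp only [hm, hm0]
  rw [Zp, hv]
  refine zform_sum (nd p) (2 * p ^ 2 + 1) n _ (fun i => (af (_root_.hK (K i)) p, cf (_root_.hK (K i)) p)) c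
    (δ := 1 / p) (b := -p) (by positivity) (fun j => rfl) ?_
  rw [← hv]
  exact ENNReal.toReal_nonneg
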